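/- Let n be a natural number with n ≥ 2 and let t : ℕ → ℕ be a finitely supported function with t(0) = t(1) = 0; write t₂ = t(2) and s = ∑_{r ≥ 2} t_r, and assume s ≥ 1. Define the rational number h = (1/s)·(−2n + ∑_{r ≥ 2} r(r−1)·t_r − ∑_{r ≥ 2} r²·t_r). If 4n − t₂ + ∑_{r ≥ 3} (r − 4)·t_r ≤ 72, then h ≥ −72. -/

import Mathlib

open Finset

/-- Combined form of the main theorem and corollary: for a transversal
arrangement of `n ≥ 2` rational curves with multiplicity counts `t`
(`t 0 = t 1 = 0`), `s = ∑_{r≥2} t_r ≥ 1`, and Harbourne constant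
`h = (1/s)(−2n + ∑_{r≥2} r(r−1) t_r − ∑_{r≥2} r² t_r)`, the inequality
`4n − t₂ + ∑_{r≥3}(r−4)t_r ≤ 72` implies `h ≥ −72`. -/
theorem stmt_7 (n : ℕ) (hn : 2 ≤ n) (t : ℕ →₀ ℕ) (h0 : t 0 = 0) (h1 : t 1 = 0)
    (s : ℕ) (hs : s = ∑ r ∈ t.support, t r) (hs1 : 1 ≤ s)
    (h : ℚ)
    (hh : h = (1 / (s : ℚ)) * (-2 * n + ∑ r ∈ t.support, (r : ℚ) * (r - 1) * t r
      - ∑ r ∈ t.support, (r : ℚ) ^ 2 * t r))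
    (hineq : 4 * (n : ℤ) - t 2
        + ∑ r ∈ t.support.filter (fun r => 3 ≤ r), ((r : ℤ) - 4) * t r ≤ 72) :
    h ≥ -72 := by
  have ht2 : (t 2 : ℤ) = ∑ r ∈ t.support, if r = 2 then (t r : ℤ) else 0 := by
    rw [Finset.sum_ite_eq']
    split_ifs with hm
    · rfl
    · simpa using hm
  have key : ∑ r ∈ t.support, ((r : ℤ) - 4) * t r ≤ - (t 2 : ℤ)
      + ∑ r ∈ t.support.filter (fun r => 3 ≤ r), ((r : ℤ) - 4) * t r := by
    rw [ht2, Finset.sum_filter, ← Finset.sum_neg_distrib, ← Finset.sum_add_distrib]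
    apply Finset.sum_le_sum
    intro r _
    rcases (by omega : r = 0 ∨ r = 1 ∨ r = 2 ∨ 3 ≤ r) with rfl | rfl | rfl | h3
    · simp [h0]
    · simp [h1]
    · simp
      omega
    · have : r ≠ 2 := by omega
      simp [h3, this]
  have e1 : ∑ r ∈ t.support, ((r : ℤ) - 4) * t r
      = ∑ r ∈ t.support, (r : ℤ) * t r - 4 * (s : ℤ) := by
    rw [hs]
    push_cast
    rw [Finset.mul_sum, ← Finset.sum_sub_distrib]
    exact Finset.sum_congr rfl fun r _ => by ring
  have e2 : ∑ r ∈ t.support, (r : ℚ) * (r - 1) * t r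
      - ∑ r ∈ t.support, (r : ℚ) ^ 2 * t r
      = - ((∑ r ∈ t.support, (r : ℤ) * t r : ℤ) : ℚ) := by
    push_cast
    rw [← Finset.sum_sub_distrib, ← Finset.sum_neg_distrib]
    exact Finset.sum_congr rfl fun r _ => by ring
  have e3 : 2 * (n : ℤ) + ∑ r ∈ t.support, (r : ℤ) * t r ≤ 72 * s := by
    omega
  have e4 : 2 * (n : ℚ) + ((∑ r ∈ t.support, (r : ℤ) * t r : ℤ) : ℚ) ≤ 72 * s := by
    exact_mod_cast e3
  have hspos : (0 : ℚ) < s := by exact_mod_cast hs1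
  rw [hh, add_sub_assoc, e2, ge_iff_le, one_div, inv_mul_eq_div, le_div_iff₀ hspos]
  linarith
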